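/- Let V be an open subset of ℝ^d equipped with Lebesgue measure, and let U be a bounded measurable subset of ℝ^N equipped with Lebesgue measure. For each positive integer k and each u ∈ U let Φ_{k,u} : V → ℝ^d be an injective C¹ map onto its image Φ_{k,u}(V), depending jointly continuously on (x, u), such that the Jacobian determinants det DΦ_{k,u}(x) converge to 1 uniformly in (x, u) ∈ V × U as k → ∞. Let f and (f_k) be real-valued functions in L¹(V) with compact support in V, such that supp f_k ⊆ Φ_{k,u}(V) for all u ∈ U, such that (f_k) is dominated by a single function in L¹(V), and such that the functions (x, u) ↦ f_k(Φ_{k,u}(x)) are dominated by a single function in L¹(V × U). Assume (i) lim_k ∫_V f_k dx = ∫_V f dx, and (ii) limsup_k f_k(Φ_{k,u}(x)) ≤ f(x) for almost every (x, u) ∈ V × U. Then the functions (x, u) ↦ f_k(Φ_{k,u}(x)) converge to (x, u) ↦ f(x) in L¹(V × U); in particular there is a subsequence k_j such that f_{k_j}(Φ_{k_j,u}(x)) converges to f(x) for almost all pairs (x, u) ∈ V × U. -/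

import Mathlib

open MeasureTheory Filter Topology

/-!
Change of variables on each slice `u`, together with Jacobians tending to `1`, shows that
`∫∫ fₖ(Φ_{k,u}(x)) dx du` has the same limit as `|U| ∫ fₖ`, that is `∫∫ f(x) dx du`.
On the other hand the `limsup` hypothesis and dominated convergence force the positive part of
`Hₖ(x, u) = fₖ(Φ_{k,u}(x)) - f(x)` to tend to `0` in `L¹`. Since `|Hₖ| = 2 Hₖ⁺ - Hₖ`, both facts
together give `Hₖ → 0` in `L¹`.
-/

section L1Convergence

variable {ι α : Type*} {l : Filter ι}

theorem tendsto_posPart_sub_of_limsup_le {a : ι → ℝ} {b : ℝ}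
    (hbdd : l.IsBoundedUnder (· ≤ ·) a) (hlim : limsup a l ≤ b) :
    Tendsto (fun i => (a i - b)⁺) l (𝓝 0) := by
  refine tendsto_order.2 ⟨fun c hc => .of_forall fun i => hc.trans_le (posPart_nonneg _),
    fun c hc => ?_⟩
  have hlt : limsup a l < b + c := hlim.trans_lt (lt_add_of_pos_right b hc)
  filter_upwards [eventually_lt_of_limsup_lt hlt hbdd] with i hi
  exact max_lt (sub_left_lt_of_lt_add hi) hc

variable [MeasurableSpace α] {μ : Measure α}

theorem tendsto_integral_posPart_sub_of_limsup_le [Countable ι] [l.IsCountablyGenerated]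
    {F : ι → α → ℝ} {f G : α → ℝ} (hF : ∀ᶠ i in l, AEStronglyMeasurable (F i) μ)
    (hf : Integrable f μ) (hG : Integrable G μ) (hdom : ∀ i, ∀ᵐ x ∂μ, |F i x| ≤ G x)
    (hlim : ∀ᵐ x ∂μ, limsup (fun i => F i x) l ≤ f x) :
    Tendsto (fun i => ∫ x, (F i x - f x)⁺ ∂μ) l (𝓝 0) := by
  rw [← integral_zero α ℝ (μ := μ)]
  refine tendsto_integral_filter_of_dominated_convergence (fun x => G x + |f x|) ?_ ?_
    (hG.add hf.abs) ?_
  · filter_upwards [hF] with i hi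
    exact (hi.sub hf.aestronglyMeasurable).sup aestronglyMeasurable_const
  · refine .of_forall fun i => (hdom i).mono fun x hx => ?_
    calc ‖(F i x - f x)⁺‖ = (F i x - f x)⁺ := Real.norm_of_nonneg (posPart_nonneg _)
      _ ≤ |F i x - f x| := sup_le (le_abs_self _) (abs_nonneg _)
      _ ≤ |F i x| + |f x| := abs_sub _ _
      _ ≤ G x + |f x| := by gcongr
  · filter_upwards [hlim, ae_all_iff.2 hdom] with x hx hdomx
    exact tendsto_posPart_sub_of_limsup_le
      (isBoundedUnder_of ⟨G x, fun i => (le_abs_self _).trans (hdomx i)⟩) hx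

theorem tendsto_integral_abs_of_tendsto_integral_posPart {H : ι → α → ℝ}
    (hH : ∀ᶠ i in l, Integrable (H i) μ) (hint : Tendsto (fun i => ∫ x, H i x ∂μ) l (𝓝 0))
    (hpos : Tendsto (fun i => ∫ x, (H i x)⁺ ∂μ) l (𝓝 0)) :
    Tendsto (fun i => ∫ x, |H i x| ∂μ) l (𝓝 0) := by
  have hlim := (hpos.const_mul 2).sub hint
  rw [mul_zero, sub_zero] at hlim
  refine hlim.congr' ?_
  filter_upwards [hH] with i hi
  have hi_pos : Integrable (fun x => (H i x)⁺) μ := hi.pos_part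
  rw [← integral_const_mul, ← integral_sub (hi_pos.const_mul 2) hi]
  refine integral_congr_ae (.of_forall fun x => ?_)
  have habs := abs_add_eq_two_nsmul_posPart (H i x)
  rw [two_nsmul] at habs
  dsimp only
  linarith

theorem tendsto_integral_abs_sub_of_limsup_le [Countable ι] [l.IsCountablyGenerated]
    {F : ι → α → ℝ} {f G : α → ℝ} (hF : ∀ᶠ i in l, AEStronglyMeasurable (F i) μ)
    (hf : Integrable f μ) (hG : Integrable G μ) (hdom : ∀ i, ∀ᵐ x ∂μ, |F i x| ≤ G x)
    (hint : Tendsto (fun i => ∫ x, F i x ∂μ) l (𝓝 (∫ x, f x ∂μ)))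
    (hlim : ∀ᵐ x ∂μ, limsup (fun i => F i x) l ≤ f x) :
    Tendsto (fun i => ∫ x, |F i x - f x| ∂μ) l (𝓝 0) := by
  have hFint : ∀ᶠ i in l, Integrable (F i) μ := hF.mono fun i hi => hG.mono' hi (hdom i)
  refine tendsto_integral_abs_of_tendsto_integral_posPart (hFint.mono fun i hi => hi.sub hf) ?_
    (tendsto_integral_posPart_sub_of_limsup_le hF hf hG hdom hlim)
  refine (tendsto_sub_nhds_zero_iff.2 hint).congr' ?_
  filter_upwards [hFint] with i hi
  exact (integral_sub hi hf).symm

theorem exists_subseq_tendsto_ae_zero_of_tendsto_integral_norm {E : Type*} [NormedAddCommGroup E]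
    {H : ℕ → α → E} (hH : ∀ᶠ k in atTop, Integrable (H k) μ)
    (hlim : Tendsto (fun k => ∫ x, ‖H k x‖ ∂μ) atTop (𝓝 0)) :
    ∃ φ : ℕ → ℕ, StrictMono φ ∧ ∀ᵐ x ∂μ, Tendsto (fun j => H (φ j) x) atTop (𝓝 0) := by
  obtain ⟨k₀, hk₀⟩ := eventually_atTop.1 hH
  have hint (j : ℕ) : Integrable (H (j + k₀)) μ := hk₀ _ (Nat.le_add_left _ _)
  have hnorm : Tendsto (fun j => eLpNorm (H (j + k₀) - 0) 1 μ) atTop (𝓝 0) := by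
    rw [← ENNReal.ofReal_zero]
    refine (ENNReal.tendsto_ofReal ((tendsto_add_atTop_iff_nat k₀).2 hlim)).congr fun j => ?_
    rw [sub_zero, eLpNorm_one_eq_lintegral_enorm, ofReal_integral_norm_eq_lintegral_enorm (hint j)]
  obtain ⟨φ, hφ, hae⟩ := (tendstoInMeasure_of_tendsto_eLpNorm one_ne_zero
    (fun j => (hint j).aestronglyMeasurable) aestronglyMeasurable_zero hnorm).exists_seq_tendsto_ae
  exact ⟨fun j => φ j + k₀, fun i j hij => Nat.add_lt_add_right (hφ hij) k₀, hae⟩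

end L1Convergence

theorem map_prod_absolutelyContinuous {α β γ : Type*} [MeasurableSpace α] [MeasurableSpace β]
    [MeasurableSpace γ] {μ : Measure α} {ν : Measure β} {τ : Measure γ} [SFinite μ] [SFinite ν]
    {T : α × β → γ} (hT : AEMeasurable T (μ.prod ν))
    (hslice : ∀ᵐ b ∂ν, μ.map (fun a => T (a, b)) ≪ τ) :
    (μ.prod ν).map T ≪ τ := by
  have hmk : ∀ᵐ b ∂ν, (fun a => T (a, b)) =ᵐ[μ] fun a => hT.mk T (a, b) := by
    refine Measure.ae_ae_of_ae_prod (p := fun q : β × α => T q.swap = hT.mk T q.swap) ?_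
    exact Measure.measurePreserving_swap.quasiMeasurePreserving.ae hT.ae_eq_mk
  rw [Measure.map_congr hT.ae_eq_mk]
  refine (QuasiMeasurePreserving.prod_of_left hT.measurable_mk ?_).absolutelyContinuous
  filter_upwards [hslice, hmk] with b hb hTb
  exact ⟨hT.measurable_mk.comp measurable_prodMk_right, by rwa [← Measure.map_congr hTb]⟩

section ChangeOfVariables

variable {E F P : Type*} [NormedAddCommGroup E] [NormedSpace ℝ E] [FiniteDimensional ℝ E]
  [MeasurableSpace E] [BorelSpace E] {μ : Measure E} [μ.IsAddHaarMeasure] {s : Set E}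
  [MeasurableSpace P] {ν : Measure P}

theorem map_restrict_absolutelyContinuous_of_injOn {g : E → E} {g' : E → E →L[ℝ] E}
    (hs : MeasurableSet s) (hg' : ∀ x ∈ s, HasFDerivWithinAt g (g' x) s x) (hinj : s.InjOn g)
    (hdet : ∀ x ∈ s, (g' x).det ≠ 0) : (μ.restrict s).map g ≪ μ := by
  have hg : AEMeasurable g (μ.restrict s) :=
    ContinuousOn.aemeasurable (fun x hx => (hg' x hx).continuousWithinAt) hs
  have hJ : μ.restrict s ≪
      (μ.restrict s).withDensity fun x => ENNReal.ofReal |(g' x).det| := by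
    refine withDensity_absolutelyContinuous'
      (aemeasurable_ofReal_abs_det_fderivWithin μ hs hg') (ae_restrict_of_forall_mem hs ?_)
    exact fun x hx => (ENNReal.ofReal_pos.2 (abs_pos.2 (hdet x hx))).ne'
  refine .mk fun t ht hμt => ?_
  rw [Measure.map_apply_of_aemeasurable hg ht]
  apply hJ
  rw [← Measure.map_apply_of_aemeasurable (hg.mono_ac (withDensity_absolutelyContinuous _ _)) ht,
    map_withDensity_abs_det_fderiv_eq_addHaar μ hs.nullMeasurableSet hg' hinj]
  exact Measure.absolutelyContinuous_restrict hμt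

theorem aestronglyMeasurable_comp_of_ae_injOn {X : Type*} [TopologicalSpace X] [SFinite ν]
    {T : P → E → E} {T' : P → E → E →L[ℝ] E}
    (hs : MeasurableSet s)
    (hT : AEMeasurable (fun p : E × P => T p.2 p.1) ((μ.restrict s).prod ν))
    (hT' : ∀ᵐ u ∂ν, ∀ x ∈ s, HasFDerivWithinAt (T u) (T' u x) s x)
    (hinj : ∀ᵐ u ∂ν, s.InjOn (T u)) (hdet : ∀ᵐ u ∂ν, ∀ x ∈ s, (T' u x).det ≠ 0)
    {h : E → X} (hh : AEStronglyMeasurable h μ) :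
    AEStronglyMeasurable (fun p : E × P => h (T p.2 p.1)) ((μ.restrict s).prod ν) := by
  refine (hh.mono_ac (map_prod_absolutelyContinuous hT ?_)).comp_aemeasurable hT
  filter_upwards [hT', hinj, hdet] with u hT'u hinju hdetu
  exact map_restrict_absolutelyContinuous_of_injOn hs hT'u hinju hdetu

theorem eventually_integrable_prod_comp {X ι : Type*} [NormedAddCommGroup X] [SFinite ν]
    {l : Filter ι} {T : ι → P → E → E} {T' : ι → P → E → E →L[ℝ] E}
    (hs : MeasurableSet s)
    (hT : ∀ i, AEMeasurable (fun p : E × P => T i p.2 p.1) ((μ.restrict s).prod ν))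
    (hT' : ∀ i, ∀ᵐ u ∂ν, ∀ x ∈ s, HasFDerivWithinAt (T i u) (T' i u x) s x)
    (hinj : ∀ i, ∀ᵐ u ∂ν, s.InjOn (T i u))
    (hdet : ∀ᶠ i in l, ∀ᵐ u ∂ν, ∀ x ∈ s, (T' i u x).det ≠ 0)
    {h : ι → E → X} (hh : ∀ i, AEStronglyMeasurable (h i) μ)
    {G : E × P → ℝ} (hG : Integrable G ((μ.restrict s).prod ν))
    (hdom : ∀ i, ∀ᵐ p ∂((μ.restrict s).prod ν), ‖h i (T i p.2 p.1)‖ ≤ G p) :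
    ∀ᶠ i in l, Integrable (fun p : E × P => h i (T i p.2 p.1)) ((μ.restrict s).prod ν) :=
  hdet.mono fun i hi => hG.mono'
    (aestronglyMeasurable_comp_of_ae_injOn hs (hT i) (hT' i) (hinj i) hi (hh i)) (hdom i)

variable [NormedAddCommGroup F] [NormedSpace ℝ F]

theorem norm_setIntegral_comp_sub_setIntegral_image_le {g : E → E} {g' : E → E →L[ℝ] E}
    (hs : MeasurableSet s) (hg' : ∀ x ∈ s, HasFDerivWithinAt g (g' x) s x) (hinj : s.InjOn g)
    {ε : ℝ} (hdet : ∀ x ∈ s, |(|(g' x).det| - 1)| ≤ ε) {h : E → F}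
    (hh : IntegrableOn (fun x => h (g x)) s μ) :
    ‖(∫ x in s, h (g x) ∂μ) - ∫ y in g '' s, h y ∂μ‖ ≤ ε * ∫ x in s, ‖h (g x)‖ ∂μ := by
  have hJ : AEStronglyMeasurable (fun x => |(g' x).det|) (μ.restrict s) :=
    (continuous_abs.comp ContinuousLinearMap.continuous_det).measurable.comp_aemeasurable
      (aemeasurable_fderivWithin μ hs hg') |>.aestronglyMeasurable
  have hJh : IntegrableOn (fun x => |(g' x).det| • h (g x)) s μ := by
    refine hh.bdd_smul (1 + ε) hJ (ae_restrict_of_forall_mem hs fun x hx => ?_)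
    rw [Real.norm_eq_abs, abs_abs]
    linarith [(abs_le.1 (hdet x hx)).2]
  rw [integral_image_eq_integral_abs_det_fderiv_smul μ hs hg' hinj, ← integral_sub hh hJh,
    ← integral_const_mul]
  refine norm_integral_le_of_norm_le (hh.norm.const_mul ε)
    (ae_restrict_of_forall_mem hs fun x hx => ?_)
  calc ‖h (g x) - |(g' x).det| • h (g x)‖ = ‖(1 - |(g' x).det|) • h (g x)‖ := by
        rw [sub_smul, one_smul]
    _ = |(|(g' x).det| - 1)| * ‖h (g x)‖ := by rw [norm_smul, Real.norm_eq_abs, abs_sub_comm]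
    _ ≤ ε * ‖h (g x)‖ := by gcongr; exact hdet x hx

theorem norm_integral_prod_comp_sub_smul_integral_le [CompleteSpace F] [IsFiniteMeasure ν]
    {T : P → E → E} {T' : P → E → E →L[ℝ] E}
    (hs : MeasurableSet s)
    (hT' : ∀ᵐ u ∂ν, ∀ x ∈ s, HasFDerivWithinAt (T u) (T' u x) s x)
    (hinj : ∀ᵐ u ∂ν, s.InjOn (T u)) {ε : ℝ}
    (hdet : ∀ᵐ u ∂ν, ∀ x ∈ s, |(|(T' u x).det| - 1)| ≤ ε) {h : E → F}
    (hsupp : ∀ᵐ u ∂ν, Function.support h ⊆ T u '' s)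
    (hh : Integrable (fun p : E × P => h (T p.2 p.1)) ((μ.restrict s).prod ν)) :
    ‖(∫ p : E × P, h (T p.2 p.1) ∂((μ.restrict s).prod ν)) - ν.real Set.univ • ∫ y, h y ∂μ‖ ≤
      ε * ∫ p : E × P, ‖h (T p.2 p.1)‖ ∂((μ.restrict s).prod ν) := by
  rw [← integral_const, integral_prod_symm _ hh, integral_prod_symm _ hh.norm,
    ← integral_const_mul, ← integral_sub hh.integral_prod_right (integrable_const _)]
  refine norm_integral_le_of_norm_le (hh.norm.integral_prod_right.const_mul ε) ?_
  filter_upwards [hT', hinj, hdet, hsupp, hh.prod_left_ae] with u hT'u hinju hdetu hsuppu hhu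
  rw [← setIntegral_eq_integral_of_forall_compl_eq_zero (s := T u '' s)
    fun y hy => Function.notMem_support.1 fun hy' => hy (hsuppu hy')]
  exact norm_setIntegral_comp_sub_setIntegral_image_le hs hT'u hinju hdetu hhu

theorem tendsto_integral_prod_comp [CompleteSpace F] [IsFiniteMeasure ν]
    {ι : Type*} {l : Filter ι} {T : ι → P → E → E} {T' : ι → P → E → E →L[ℝ] E}
    (hs : MeasurableSet s)
    (hT' : ∀ i, ∀ᵐ u ∂ν, ∀ x ∈ s, HasFDerivWithinAt (T i u) (T' i u x) s x)
    (hinj : ∀ i, ∀ᵐ u ∂ν, s.InjOn (T i u))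
    (hdet : ∀ ε > 0, ∀ᶠ i in l, ∀ᵐ u ∂ν, ∀ x ∈ s, |(|(T' i u x).det| - 1)| ≤ ε)
    {h : ι → E → F} (hsupp : ∀ i, ∀ᵐ u ∂ν, Function.support (h i) ⊆ T i u '' s)
    (hh : ∀ᶠ i in l,
      Integrable (fun p : E × P => h i (T i p.2 p.1)) ((μ.restrict s).prod ν))
    (hbdd : l.IsBoundedUnder (· ≤ ·)
      fun i => ∫ p : E × P, ‖h i (T i p.2 p.1)‖ ∂((μ.restrict s).prod ν))
    {c : F} (hlim : Tendsto (fun i => ∫ y, h i y ∂μ) l (𝓝 c)) :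
    Tendsto (fun i => ∫ p : E × P, h i (T i p.2 p.1) ∂((μ.restrict s).prod ν)) l
      (𝓝 (ν.real Set.univ • c)) := by
  have hnorm (i : ι) : ‖∫ p : E × P, ‖h i (T i p.2 p.1)‖ ∂((μ.restrict s).prod ν)‖ =
      ∫ p : E × P, ‖h i (T i p.2 p.1)‖ ∂((μ.restrict s).prod ν) :=
    Real.norm_of_nonneg (integral_nonneg fun _ => norm_nonneg _)
  have hbigO : (fun i => ∫ p : E × P, ‖h i (T i p.2 p.1)‖ ∂((μ.restrict s).prod ν)) =O[l]
      fun _ => (1 : ℝ) := (Asymptotics.isBigO_one_iff ℝ).2 (by simpa only [hnorm] using hbdd)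
  have hdiff : Tendsto (fun i => (∫ p : E × P, h i (T i p.2 p.1) ∂((μ.restrict s).prod ν)) -
      ν.real Set.univ • ∫ y, h i y ∂μ) l (𝓝 0) := by
    refine (Asymptotics.isLittleO_one_iff ℝ).1
      ((Asymptotics.isLittleO_iff.2 fun ε hε => ?_).trans_isBigO hbigO)
    filter_upwards [hdet ε hε, hh] with i hdeti hhi
    rw [hnorm]
    exact norm_integral_prod_comp_sub_smul_integral_le hs (hT' i) (hinj i) hdeti (hsupp i) hhi
  simpa only [sub_add_cancel, zero_add] using hdiff.add (hlim.const_smul (ν.real Set.univ))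

end ChangeOfVariables

theorem bergman_integration_lemma_general {E P : Type*} [NormedAddCommGroup E] [NormedSpace ℝ E]
    [FiniteDimensional ℝ E] [MeasurableSpace E] [BorelSpace E] [MeasurableSpace P]
    {μ : Measure E} [μ.IsAddHaarMeasure] {ν : Measure P} [SFinite ν]
    {V : Set E} (hV : MeasurableSet V) {U : Set P} (hU : MeasurableSet U) (hνU : ν U < ⊤)
    {Φ : ℕ → P → E → E} {Φ' : ℕ → P → E → E →L[ℝ] E}
    (hΦ : ∀ k, AEMeasurable (fun p : E × P => Φ k p.2 p.1) ((μ.prod ν).restrict (V ×ˢ U)))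
    (hΦ' : ∀ k, ∀ u ∈ U, ∀ x ∈ V, HasFDerivWithinAt (Φ k u) (Φ' k u x) V x)
    (hinj : ∀ k, ∀ u ∈ U, V.InjOn (Φ k u))
    (hjac : ∀ ε > 0, ∃ k₀ : ℕ, ∀ k ≥ k₀, ∀ x ∈ V, ∀ u ∈ U, |(|(Φ' k u x).det| - 1)| < ε)
    {f : E → ℝ} {fk : ℕ → E → ℝ} (hf : IntegrableOn f V μ)
    (hfk : ∀ k, AEStronglyMeasurable (fk k) (μ.restrict V))
    (hfkV : ∀ k, Function.support (fk k) ⊆ V)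
    (hsupp : ∀ k, ∀ u ∈ U, Function.support (fk k) ⊆ Φ k u '' V)
    {G : E × P → ℝ} (hG : Integrable G ((μ.restrict V).prod (ν.restrict U)))
    (hdom : ∀ k, ∀ᵐ p ∂((μ.restrict V).prod (ν.restrict U)), |fk k (Φ k p.2 p.1)| ≤ G p)
    (hfk_lim : Tendsto (fun k => ∫ x in V, fk k x ∂μ) atTop (𝓝 (∫ x in V, f x ∂μ)))
    (hlimsup : ∀ᵐ p ∂((μ.restrict V).prod (ν.restrict U)),
      limsup (fun k => fk k (Φ k p.2 p.1)) atTop ≤ f p.1) :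
    Tendsto (fun k => ∫ p, |fk k (Φ k p.2 p.1) - f p.1| ∂((μ.restrict V).prod (ν.restrict U)))
      atTop (𝓝 0) ∧
    ∃ φ : ℕ → ℕ, StrictMono φ ∧ ∀ᵐ p ∂((μ.restrict V).prod (ν.restrict U)),
      Tendsto (fun j => fk (φ j) (Φ (φ j) p.2 p.1)) atTop (𝓝 (f p.1)) := by
  have : IsFiniteMeasure (ν.restrict U) := isFiniteMeasure_restrict.2 hνU.ne
  simp only [← Measure.prod_restrict] at hΦ
  have hdet : ∀ ε > 0, ∀ᶠ k in atTop, ∀ᵐ u ∂ν.restrict U, ∀ x ∈ V,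
      |(|(Φ' k u x).det| - 1)| < ε := fun ε hε =>
    (eventually_atTop.2 (hjac ε hε)).mono fun k hk =>
      ae_restrict_of_forall_mem hU fun u hu x hx => hk x hx u hu
  have hΦ'_ae k := ae_restrict_of_forall_mem (μ := ν) hU (hΦ' k)
  have hinj_ae k := ae_restrict_of_forall_mem (μ := ν) hU (hinj k)
  have hdet_ne : ∀ᶠ k in atTop, ∀ᵐ u ∂ν.restrict U, ∀ x ∈ V, (Φ' k u x).det ≠ 0 := by
    refine (hdet 1 one_pos).mono fun k hk => hk.mono fun u hu x hx hzero => ?_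
    simpa [hzero] using hu x hx
  have hfk_meas k : AEStronglyMeasurable (fk k) μ := by
    rw [← Set.indicator_eq_self.2 (hfkV k)]
    exact (aestronglyMeasurable_indicator_iff hV).2 (hfk k)
  have hint := eventually_integrable_prod_comp hV hΦ hΦ'_ae hinj_ae hdet_ne hfk_meas hG hdom
  have hfst : Integrable (fun p : E × P => f p.1) ((μ.restrict V).prod (ν.restrict U)) :=
    hf.comp_fst _
  have hlim : Tendsto (fun k => ∫ p : E × P, fk k (Φ k p.2 p.1)
      ∂((μ.restrict V).prod (ν.restrict U))) atTop
      (𝓝 (∫ p : E × P, f p.1 ∂((μ.restrict V).prod (ν.restrict U)))) := by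
    rw [integral_fun_fst]
    refine tendsto_integral_prod_comp hV hΦ'_ae hinj_ae
      (fun ε hε => (hdet ε hε).mono fun k hk => hk.mono fun u hu x hx => (hu x hx).le)
      (fun k => ae_restrict_of_forall_mem hU (hsupp k)) hint
      (isBoundedUnder_of_eventually_le (hint.mono fun k hk => integral_mono_ae hk.norm hG (hdom k)))
      (hfk_lim.congr fun k => setIntegral_eq_integral_of_forall_compl_eq_zero fun x hx => ?_)
    exact Function.notMem_support.1 fun hx' => hx (hfkV k hx')
  have hL1 := tendsto_integral_abs_sub_of_limsup_le
    (hint.mono fun k hk => hk.aestronglyMeasurable) hfst hG hdom hlim hlimsup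
  obtain ⟨φ, hφ, hae⟩ := exists_subseq_tendsto_ae_zero_of_tendsto_integral_norm
    (hint.mono fun k hk => hk.sub hfst) hL1
  exact ⟨hL1, φ, hφ, hae.mono fun p hp => tendsto_sub_nhds_zero_iff.1 hp⟩

/-- The paper's integration Lemma 4.3: if `Φ_{k,u}` are injective `C¹` maps on `V`
whose Jacobians tend to `1` uniformly, `f` and the `fₖ` are compactly supported `L¹`
functions on `V` with `supp fₖ ⊆ Φ_{k,u}(V)`, the sequences are suitably dominated,
the integrals of `fₖ` converge to that of `f`, and `limsup fₖ(Φ_{k,u}(x)) ≤ f(x)`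
for a.e. `(x,u)`, then `(x,u) ↦ fₖ(Φ_{k,u}(x))` converges to `(x,u) ↦ f(x)` in
`L¹(V × U)`; in particular a subsequence converges for almost all pairs `(x,u)`. -/
theorem bergman_integration_lemma
    (d N : ℕ)
    (V : Set (Fin d → ℝ)) (hV : IsOpen V)
    (U : Set (Fin N → ℝ)) (hUmeas : MeasurableSet U) (hUb : Bornology.IsBounded U)
    (Φ : ℕ → (Fin N → ℝ) → (Fin d → ℝ) → (Fin d → ℝ))
    (hinj : ∀ k, ∀ u ∈ U, Set.InjOn (Φ k u) V)
    (hC1 : ∀ k, ∀ u ∈ U, ContDiffOn ℝ 1 (Φ k u) V)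
    (hcont : ∀ k, ContinuousOn (fun p : (Fin d → ℝ) × (Fin N → ℝ) => Φ k p.2 p.1) (V ×ˢ U))
    (hjac : ∀ ε > 0, ∃ k₀ : ℕ, ∀ k ≥ k₀, ∀ x ∈ V, ∀ u ∈ U,
      |(fderiv ℝ (Φ k u) x).det - 1| < ε)
    (f : (Fin d → ℝ) → ℝ) (fk : ℕ → (Fin d → ℝ) → ℝ)
    (hf : Integrable f (volume.restrict V))
    (hfsupp : HasCompactSupport f) (hfsub : tsupport f ⊆ V)
    (hfk : ∀ k, Integrable (fk k) (volume.restrict V))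
    (hfksupp : ∀ k, HasCompactSupport (fk k)) (hfksub : ∀ k, tsupport (fk k) ⊆ V)
    (hsupp : ∀ k, ∀ u ∈ U, Function.support (fk k) ⊆ Φ k u '' V)
    (g : (Fin d → ℝ) → ℝ) (hg : Integrable g (volume.restrict V))
    (hdom : ∀ k, ∀ᵐ x ∂(volume.restrict V), |fk k x| ≤ g x)
    (G : (Fin d → ℝ) × (Fin N → ℝ) → ℝ)
    (hG : Integrable G ((volume.restrict V).prod (volume.restrict U)))
    (hdom2 : ∀ k, ∀ᵐ p ∂((volume.restrict V).prod (volume.restrict U)),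
      |fk k (Φ k p.2 p.1)| ≤ G p)
    (hi : Tendsto (fun k => ∫ x in V, fk k x) atTop (𝓝 (∫ x in V, f x)))
    (hii : ∀ᵐ p ∂((volume.restrict V).prod (volume.restrict U)),
      limsup (fun k => fk k (Φ k p.2 p.1)) atTop ≤ f p.1) :
    Tendsto
      (fun k => ∫ p, |fk k (Φ k p.2 p.1) - f p.1|
        ∂((volume.restrict V).prod (volume.restrict U)))
      atTop (𝓝 0) ∧
    ∃ φ : ℕ → ℕ, StrictMono φ ∧
      ∀ᵐ p ∂((volume.restrict V).prod (volume.restrict U)),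
        Tendsto (fun j => fk (φ j) (Φ (φ j) p.2 p.1)) atTop (𝓝 (f p.1)) := by
  exact bergman_integration_lemma_general hV.measurableSet hUmeas hUb.measure_lt_top
    (fun k => (hcont k).aemeasurable (hV.measurableSet.prod hUmeas))
    (fun k u hu x hx => (((hC1 k u hu).differentiableOn one_ne_zero).differentiableAt
      (hV.mem_nhds hx)).hasFDerivAt.hasFDerivWithinAt) hinj
    (fun ε hε => (hjac ε hε).imp fun k₀ h k hk x hx u hu =>
      (by simpa using abs_abs_sub_abs_le_abs_sub (fderiv ℝ (Φ k u) x).det 1 :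
        |(|(fderiv ℝ (Φ k u) x).det| - 1)| ≤ _).trans_lt (h k hk x hx u hu))
    hf (fun k => (hfk k).aestronglyMeasurable) (fun k => (subset_tsupport _).trans (hfksub k))
    hsupp hG hdom2 hi hii
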